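/- Let [n] be partitioned into clusters C_1,…,C_k with |C_r| = n_r ≥ 2, with membership matrix Z ∈ M_{n,k}({0,1}), let B ∈ M_k([0,1]) be symmetric, 𝒫 = Z B Zᵀ, and let R be the C(n,2)×C(n,2) diagonal matrix with R_{{i,j},{i,j}} = 𝒫_{i,j}. Let Q be the block-indicator matrix of the induced edge partition and M = Qᵀ A(L(K_n)) Q. Then R Q = Q · diag([B_{r,s}]_{1≤r≤s≤k}) (the diagonal matrix of order C(k+1,2) whose ((r,s),(r,s)) entry is B_{r,s}), the range of Q is an invariant subspace of R·A(L(K_n))·R, and Qᵀ (R·A(L(K_n))·R) Q = diag([B_{r,s}]) · M · diag([B_{r,s}]). -/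

import Mathlib

open scoped Classical
open Matrix

noncomputable section

/-- The edges of the complete graph `K_n`: unordered pairs of distinct elements of `Fin n`. -/
def CompleteEdge (n : ℕ) : Type := {e : Sym2 (Fin n) // ¬ e.IsDiag}

instance (n : ℕ) : Fintype (CompleteEdge n) := Subtype.fintype _
instance (n : ℕ) : DecidableEq (CompleteEdge n) := Subtype.instDecidableEq

/-- The adjacency matrix of the line graph of the complete graph `K_n`: rows and columns are
indexed by the edges of `K_n`, with entry `1` exactly when the two edges are distinct and share
an endpoint. -/
def ALK (n : ℕ) : Matrix (CompleteEdge n) (CompleteEdge n) ℝ :=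
  fun e f => if e ≠ f ∧ ∃ v, v ∈ e.1 ∧ v ∈ f.1 then 1 else 0

variable {n k : ℕ}

/-- The block of the induced edge partition to which an edge belongs: the unordered pair of
clusters of its two endpoints. Blocks are indexed by `Sym2 (Fin k)`, which has
cardinality `C(k+1,2)`. -/
def blkOf (c : Fin n → Fin k) (e : CompleteEdge n) : Sym2 (Fin k) := Sym2.map c e.1

/-- The size `m_{r,s}` of a block of the induced edge partition. -/
def blkSize (c : Fin n → Fin k) (b : Sym2 (Fin k)) : ℕ :=
  (Finset.univ.filter (fun e : CompleteEdge n => blkOf c e = b)).card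

/-- The block-indicator matrix `Q` of the induced edge partition:
`Q_{e,(r,s)} = m_{r,s}^{-1/2}` if `e ∈ C_{(r,s)}` and `0` otherwise. -/
def Qmat (c : Fin n → Fin k) : Matrix (CompleteEdge n) (Sym2 (Fin k)) ℝ :=
  fun e b => if blkOf c e = b then 1 / Real.sqrt (blkSize c b) else 0

/-- `M = Qᵀ A(L(K_n)) Q`. -/
def Mmat (c : Fin n → Fin k) : Matrix (Sym2 (Fin k)) (Sym2 (Fin k)) ℝ :=
  (Qmat c)ᵀ * ALK n * Qmat c

/-- The size of the cluster `C_r`. -/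
def clusterSize (c : Fin n → Fin k) (r : Fin k) : ℕ :=
  (Finset.univ.filter (fun i => c i = r)).card

/-- The value of a symmetric `k × k` matrix `B` on an unordered pair of indices
(for symmetric `B` this sends `s(r,s)` to `B r s`). -/
def symVal {k : ℕ} (B : Matrix (Fin k) (Fin k) ℝ) : Sym2 (Fin k) → ℝ :=
  Sym2.lift ⟨fun r s => (B r s + B s r) / 2, fun r s => by ring⟩

/-- The diagonal matrix `R` of order `C(n,2)` whose entry at the edge `{i,j}` is
`𝒫_{i,j} = B_{c(i), c(j)}` (the entry of `𝒫 = Z B Zᵀ`). -/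
def Rmat {n k : ℕ} (c : Fin n → Fin k) (B : Matrix (Fin k) (Fin k) ℝ) :
    Matrix (CompleteEdge n) (CompleteEdge n) ℝ :=
  Matrix.diagonal (fun e => symVal B (blkOf c e))

lemma aux_perm (c : Fin n → Fin k) {i j i' j' : Fin n} (hij : i ≠ j) (hij' : i' ≠ j')
    (hi : c i = c i') (hj : c j = c j') :
    ∃ σ : Equiv.Perm (Fin n), σ i = i' ∧ σ j = j' ∧ ∀ x, c (σ x) = c x := by
  have key : ∀ a b : Fin n, c a = c b → ∀ x, c (Equiv.swap a b x) = c x := by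
    intro a b h x
    rw [Equiv.swap_apply_def]
    split_ifs with h1 h2
    · rw [h1, h]
    · rw [h2, h]
    · rfl
  refine ⟨Equiv.swap (Equiv.swap i i' j) j' * Equiv.swap i i', ?_, ?_, ?_⟩
  · rw [Equiv.Perm.mul_apply, Equiv.swap_apply_left]
    apply Equiv.swap_apply_of_ne_of_ne
    · intro h
      apply hij
      apply (Equiv.swap i i').injective
      rw [Equiv.swap_apply_left]
      exact h
    · exact hij'
  · rw [Equiv.Perm.mul_apply, Equiv.swap_apply_left]
  · intro x
    rw [Equiv.Perm.mul_apply, key _ _ ?_, key _ _ hi]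
    rw [key _ _ hi, hj]

lemma aux_perm_edge (c : Fin n → Fin k) (e e' : CompleteEdge n) (h : blkOf c e = blkOf c e') :
    ∃ σ : Equiv.Perm (Fin n), Sym2.map σ e.1 = e'.1 ∧ ∀ x, c (σ x) = c x := by
  obtain ⟨e, he⟩ := e
  obtain ⟨e', he'⟩ := e'
  induction e using Sym2.ind with
  | _ i j =>
  induction e' using Sym2.ind with
  | _ i' j' =>
  simp only [blkOf, Sym2.map_mk, Sym2.mk_isDiag_iff] at h he he'
  rcases Sym2.eq_iff.1 h with ⟨h1, h2⟩ | ⟨h1, h2⟩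
  · obtain ⟨σ, a, b, d⟩ := aux_perm c he he' h1 h2
    exact ⟨σ, by simp [a, b], d⟩
  · obtain ⟨σ, a, b, d⟩ := aux_perm c he (Ne.symm he') h1 h2
    exact ⟨σ, by simp [a, b, Sym2.eq_swap], d⟩

/-- The action of a vertex permutation on edges. -/
def edgePerm (σ : Equiv.Perm (Fin n)) : Equiv.Perm (CompleteEdge n) where
  toFun e := ⟨Sym2.map σ e.1, by
    rw [Sym2.isDiag_map σ.injective]; exact e.2⟩
  invFun e := ⟨Sym2.map σ.symm e.1, by
    rw [Sym2.isDiag_map σ.symm.injective]; exact e.2⟩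
  left_inv e := by
    apply Subtype.ext
    simp [Sym2.map_map]
  right_inv e := by
    apply Subtype.ext
    simp [Sym2.map_map]

lemma ALK_perm (σ : Equiv.Perm (Fin n)) (e f : CompleteEdge n) :
    ALK n (edgePerm σ e) (edgePerm σ f) = ALK n e f := by
  unfold ALK
  congr 1
  simp only [ne_eq, EmbeddingLike.apply_eq_iff_eq, eq_iff_iff]
  apply and_congr_right
  intro _
  constructor
  · rintro ⟨v, h1, h2⟩
    obtain ⟨a, ha, rfl⟩ := Sym2.mem_map.1 h1
    obtain ⟨b, hb, hab⟩ := Sym2.mem_map.1 h2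
    have := σ.injective hab
    subst this
    exact ⟨_, ha, hb⟩
  · rintro ⟨v, h1, h2⟩
    exact ⟨σ v, Sym2.mem_map.2 ⟨v, h1, rfl⟩, Sym2.mem_map.2 ⟨v, h2, rfl⟩⟩

lemma Qmat_perm (c : Fin n → Fin k) (σ : Equiv.Perm (Fin n)) (h : ∀ x, c (σ x) = c x)
    (e : CompleteEdge n) (b : Sym2 (Fin k)) :
    Qmat c (edgePerm σ e) b = Qmat c e b := by
  have hb : blkOf c (edgePerm σ e) = blkOf c e := by
    have hc : c ∘ σ = c := funext h
    change Sym2.map c (Sym2.map σ e.1) = Sym2.map c e.1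
    rw [Sym2.map_map, hc]
  unfold Qmat
  rw [hb]

lemma AQ_const (c : Fin n → Fin k) (e e' : CompleteEdge n) (h : blkOf c e = blkOf c e')
    (b : Sym2 (Fin k)) : (ALK n * Qmat c) e b = (ALK n * Qmat c) e' b := by
  obtain ⟨σ, h1, h2⟩ := aux_perm_edge c e e' h
  have he : edgePerm σ e = e' := Subtype.ext h1
  rw [Matrix.mul_apply, Matrix.mul_apply, ← he, ← Equiv.sum_comp (edgePerm σ)
    (fun f => ALK n (edgePerm σ e) f * Qmat c f b)]
  simp only [ALK_perm, Qmat_perm c σ h2]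

lemma AQ_factor (c : Fin n → Fin k) :
    ∃ N : Matrix (Sym2 (Fin k)) (Sym2 (Fin k)) ℝ, ALK n * Qmat c = Qmat c * N := by
  refine ⟨fun b b' => if h : ∃ e, blkOf c e = b then
    Real.sqrt (blkSize c b) * (ALK n * Qmat c) h.choose b' else 0, ?_⟩
  ext e b'
  have hex : ∃ e', blkOf c e' = blkOf c e := ⟨e, rfl⟩
  have hpos : 0 < blkSize c (blkOf c e) :=
    Finset.card_pos.2 ⟨e, by simp⟩
  have hs : Real.sqrt (blkSize c (blkOf c e)) ≠ 0 :=
    (Real.sqrt_pos.2 (by exact_mod_cast hpos)).ne'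
  refine Eq.trans ?_ Matrix.mul_apply.symm
  rw [Finset.sum_eq_single (blkOf c e)]
  · simp only [Qmat, if_true]
    rw [dif_pos hex, ← mul_assoc, one_div, inv_mul_cancel₀ hs, one_mul]
    exact AQ_const c _ _ hex.choose_spec.symm b'
  · intro b _ hb
    simp [Qmat, Ne.symm hb]
  · simp

lemma RQ_eq (c : Fin n → Fin k) (B : Matrix (Fin k) (Fin k) ℝ) :
    Rmat c B * Qmat c = Qmat c * Matrix.diagonal (symVal B) := by
  ext e b
  rw [Rmat, Matrix.diagonal_mul, Matrix.mul_diagonal]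
  unfold Qmat
  split_ifs with h
  · rw [h, mul_comm]
  · simp

/-- For an SBM with cluster map `c` (all cluster sizes ≥ 2) and symmetric
`B ∈ M_k([0,1])`, with `R` the diagonal matrix of edge probabilities, `Q` the block-indicator
matrix and `M = Qᵀ A(L(K_n)) Q`:  `R Q = Q · diag([B_{r,s}])`, the range of `Q` is an
invariant subspace of `R · A(L(K_n)) · R`, and
`Qᵀ (R · A(L(K_n)) · R) Q = diag([B_{r,s}]) · M · diag([B_{r,s}])`. -/
theorem sbm_lineGraph_mean_decomposition {n k : ℕ}
    (c : Fin n → Fin k) (hsz : ∀ r, 2 ≤ clusterSize c r)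
    (B : Matrix (Fin k) (Fin k) ℝ) (hBsym : Bᵀ = B)
    (hB : ∀ r s, B r s ∈ Set.Icc (0:ℝ) 1) :
    Rmat c B * Qmat c = Qmat c * Matrix.diagonal (symVal B) ∧
    (∃ N : Matrix (Sym2 (Fin k)) (Sym2 (Fin k)) ℝ,
        (Rmat c B * ALK n * Rmat c B) * Qmat c = Qmat c * N) ∧
    (Qmat c)ᵀ * (Rmat c B * ALK n * Rmat c B) * Qmat c
      = Matrix.diagonal (symVal B) * Mmat c * Matrix.diagonal (symVal B) := by
  have h1 := RQ_eq c B
  have h2 : (Qmat c)ᵀ * Rmat c B = Matrix.diagonal (symVal B) * (Qmat c)ᵀ := by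
    have := congrArg Matrix.transpose h1
    simpa [Matrix.transpose_mul, Rmat] using this
  refine ⟨h1, ?_, ?_⟩
  · obtain ⟨N, hN⟩ := AQ_factor c
    refine ⟨Matrix.diagonal (symVal B) * N * Matrix.diagonal (symVal B), ?_⟩
    calc (Rmat c B * ALK n * Rmat c B) * Qmat c
        = Rmat c B * (ALK n * (Rmat c B * Qmat c)) := by simp only [Matrix.mul_assoc]
      _ = Rmat c B * ((ALK n * Qmat c) * Matrix.diagonal (symVal B)) := by
          rw [h1, Matrix.mul_assoc]
      _ = (Rmat c B * Qmat c) * N * Matrix.diagonal (symVal B) := by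
          rw [hN]; simp only [Matrix.mul_assoc]
      _ = _ := by rw [h1]; simp only [Matrix.mul_assoc]
  · calc (Qmat c)ᵀ * (Rmat c B * ALK n * Rmat c B) * Qmat c
        = ((Qmat c)ᵀ * Rmat c B) * ALK n * (Rmat c B * Qmat c) := by
          simp only [Matrix.mul_assoc]
      _ = _ := by rw [h1, h2, Mmat]; simp only [Matrix.mul_assoc]
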